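/- Let 𝒢 = {A_1, …, A_k} be a finite subset of UT(4,ℤ). If the ℝ≥0-cone generated by φ0(A_1), …, φ0(A_k) equals all of ℝ³, then the identity matrix is reachable, i.e., the 4×4 identity matrix belongs to the subsemigroup ⟨𝒢⟩ generated by 𝒢. -/

import Mathlib

open Finset

/-- The 4×4 upper unitriangular integer matrix `UT(a,b,c;d,e,f)`. -/
def UT (a b c d e f : ℤ) : Matrix (Fin 4) (Fin 4) ℤ :=
  !![1, a, d, f; 0, 1, b, e; 0, 0, 1, c; 0, 0, 0, 1]

/-- The set `UT(4,ℤ)` of 4×4 upper unitriangular integer matrices. -/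
def UT4 : Set (Matrix (Fin 4) (Fin 4) ℤ) :=
  {M | ∃ a b c d e f, M = UT a b c d e f}

/-- `φ0 : UT(4,ℤ) → ℤ³`, `UT(a,b,c;d,e,f) ↦ (a,b,c)`, followed by `ℤ³ → ℝ³`. -/
def phi0R (M : Matrix (Fin 4) (Fin 4) ℤ) : Fin 3 → ℝ :=
  ![(M 0 1 : ℝ), (M 1 2 : ℝ), (M 2 3 : ℝ)]

/-- The `ℝ≥0`-cone generated by a finite family of vectors in `ℝⁿ`. -/
def coneFin {k n : ℕ} (v : Fin k → (Fin n → ℝ)) : Set (Fin n → ℝ) :=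
  {x | ∃ r : Fin k → ℝ, (∀ i, 0 ≤ r i) ∧ x = ∑ i, r i • v i}

lemma UT_mul (a b c d e f a' b' c' d' e' f' : ℤ) :
    UT a b c d e f * UT a' b' c' d' e' f' =
      UT (a + a') (b + b') (c + c') (d + d' + a * b') (e + e' + b * c')
        (f + f' + a * e' + d * c') := by
  ext i j
  fin_cases i <;> fin_cases j <;>
    simp [UT, Matrix.mul_apply, Fin.sum_univ_succ] <;> ring

lemma UT_one : (1 : Matrix (Fin 4) (Fin 4) ℤ) = UT 0 0 0 0 0 0 := by
  ext i j
  fin_cases i <;> fin_cases j <;> simp [UT]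

lemma UT_mul_mem {S : Subsemigroup (Matrix (Fin 4) (Fin 4) ℤ)}
    {a b c d e f a' b' c' d' e' f' : ℤ}
    (h : UT a b c d e f ∈ S) (h' : UT a' b' c' d' e' f' ∈ S) :
    UT (a + a') (b + b') (c + c') (d + d' + a * b') (e + e' + b * c')
        (f + f' + a * e' + d * c') ∈ S := by
  rw [← UT_mul]; exact S.mul_mem h h'

lemma UT_eq {S : Subsemigroup (Matrix (Fin 4) (Fin 4) ℤ)}
    {a b c d e f a' b' c' d' e' f' : ℤ} (h : UT a b c d e f ∈ S)
    (ha : a' = a) (hb : b' = b) (hc : c' = c) (hd : d' = d) (he : e' = e) (hf : f' = f) :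
    UT a' b' c' d' e' f' ∈ S := by
  subst ha hb hc hd he hf; exact h

lemma UT_ex {S : Subsemigroup (Matrix (Fin 4) (Fin 4) ℤ)}
    {a b c d e f a' b' c' d' e' : ℤ} (h : UT a b c d e f ∈ S)
    (ha : a' = a) (hb : b' = b) (hc : c' = c) (hd : d' = d) (he : e' = e) :
    ∃ f', UT a' b' c' d' e' f' ∈ S := by
  subst ha hb hc hd he; exact ⟨f, h⟩

/-- powers, ignoring the corner -/
lemma UT_pow_mem {S : Subsemigroup (Matrix (Fin 4) (Fin 4) ℤ)}
    {a b c d e f : ℤ} (hab : a * b = 0) (hbc : b * c = 0)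
    (h : UT a b c d e f ∈ S) (n : ℕ) :
    ∃ f', UT ((n + 1 : ℤ) * a) ((n + 1 : ℤ) * b) ((n + 1 : ℤ) * c) ((n + 1 : ℤ) * d)
      ((n + 1 : ℤ) * e) f' ∈ S := by
  induction n with
  | zero => exact ⟨f, by simpa using h⟩
  | succ n ih =>
    obtain ⟨f', hf⟩ := ih
    refine UT_ex (UT_mul_mem hf h) ?_ ?_ ?_ ?_ ?_
    · push_cast; ring
    · push_cast; ring
    · push_cast; ring
    · push_cast; linear_combination -(n + 1 : ℤ) * hab
    · push_cast; linear_combination -(n + 1 : ℤ) * hbc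

/-- powers, when `b = c = 0`, with the corner -/
lemma UT_pow_mem' {S : Subsemigroup (Matrix (Fin 4) (Fin 4) ℤ)}
    {a d e f : ℤ} (h : UT a 0 0 d e f ∈ S) (n : ℕ) :
    ∃ f', UT ((n + 1 : ℤ) * a) 0 0 ((n + 1 : ℤ) * d) ((n + 1 : ℤ) * e) f' ∈ S ∧
      2 * f' = 2 * (n + 1 : ℤ) * f + (n + 1 : ℤ) * n * (a * e) := by
  induction n with
  | zero => exact ⟨f, by simpa using h, by simp⟩
  | succ n ih =>
    obtain ⟨f', hf, hf'⟩ := ih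
    refine ⟨f' + f + (n + 1 : ℤ) * a * e, UT_eq (UT_mul_mem hf h) ?_ ?_ ?_ ?_ ?_ ?_, ?_⟩
    · push_cast; ring
    · ring
    · ring
    · push_cast; ring
    · push_cast; ring
    · ring
    · push_cast; linear_combination hf'

/-- real cone to rational cone -/
lemma cone_int {k : ℕ} (V : Fin k → Fin 3 → ℤ)
    (h : ∀ t : Fin 3 → ℝ, ∃ r : Fin k → ℝ, (∀ i, 0 ≤ r i) ∧ ∀ j, t j = ∑ i, r i * V i j)
    (t : Fin 3 → ℤ) :
    ∃ m : ℕ, 0 < m ∧ ∃ n : Fin k → ℕ, ∀ j, ∑ i, (n i : ℤ) * V i j = m * t j := by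
  classical
  -- rational spanning
  have hspan : Submodule.span ℚ (Set.range (fun i j => (V i j : ℚ))) = ⊤ := by
    by_contra hne
    obtain ⟨f, hf0, hf⟩ := Submodule.exists_le_ker_of_lt_top _ (lt_top_iff_ne_top.mpr hne)
    have hfx : ∀ x : Fin 3 → ℚ, f x = ∑ j, x j * f (Pi.single j 1) := by
      intro x
      conv_lhs => rw [pi_eq_sum_univ' x]
      simp [map_sum]
    have hV : ∀ i, ∑ j, (V i j : ℚ) * f (Pi.single j 1) = 0 := by
      intro i
      rw [← hfx (fun j => (V i j : ℚ))]
      exact hf (Submodule.subset_span ⟨i, rfl⟩)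
    obtain ⟨r, -, hr⟩ := h (fun j => ((f (Pi.single j 1) : ℚ) : ℝ))
    have hsq : ∑ j, ((f (Pi.single j 1) : ℚ) : ℝ) * ((f (Pi.single j 1) : ℚ) : ℝ) = 0 := by
      calc _ = ∑ j, (∑ i, r i * V i j) * ((f (Pi.single j 1) : ℚ) : ℝ) := by
            refine Finset.sum_congr rfl fun j _ => ?_
            rw [← hr j]
        _ = ∑ i, r i * ∑ j, (V i j : ℝ) * ((f (Pi.single j 1) : ℚ) : ℝ) := by
            simp_rw [Finset.sum_mul, Finset.mul_sum]
            rw [Finset.sum_comm]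
            simp_rw [mul_assoc]
        _ = 0 := by
            refine Finset.sum_eq_zero fun i _ => ?_
            have := hV i
            have h2 : ((∑ j, (V i j : ℚ) * f (Pi.single j 1) : ℚ) : ℝ) = 0 := by
              rw [this]; simp
            push_cast at h2
            rw [h2, mul_zero]
    rw [Finset.sum_eq_zero_iff_of_nonneg (fun j _ => mul_self_nonneg _)] at hsq
    apply hf0
    ext j
    have := hsq j (Finset.mem_univ _)
    simpa using this
  have hR : ∀ j : Fin 3, ∃ c : Fin k → ℚ, ∀ l, ∑ i, c i * (V i l : ℚ) = if l = j then 1 else 0 := by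
    intro j
    have : (Pi.single j 1 : Fin 3 → ℚ) ∈ Submodule.span ℚ (Set.range (fun i j => (V i j : ℚ))) := by
      rw [hspan]; trivial
    obtain ⟨c, hc⟩ := (Submodule.mem_span_range_iff_exists_fun ℚ).1 this
    refine ⟨c, fun l => ?_⟩
    have := congrFun hc l
    simpa [Finset.sum_apply, Pi.single_apply] using this
  choose R hR using hR
  obtain ⟨r, hr0, hr⟩ := h (fun j => t j - ∑ i, (V i j : ℝ))
  let G : (Fin k → ℝ) → Fin k → ℝ := fun q i =>
    q i + ∑ j, ((t j : ℝ) - ∑ l, q l * V l j) * (R j i : ℝ)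
  have hopen : IsOpen {q | ∀ i, 0 < G q i} := by
    rw [Set.ofPred_forall]
    refine isOpen_iInter_of_finite fun i => ?_
    refine isOpen_lt continuous_const ?_
    fun_prop
  have hmem : (fun i => r i + 1) ∈ {q | ∀ i, 0 < G q i} := by
    intro i
    have h0 : ∀ j, (t j : ℝ) - ∑ l, (r l + 1) * (V l j : ℝ) = 0 := by
      intro j
      have := hr j
      simp only [add_mul, one_mul, Finset.sum_add_distrib]
      linarith
    simp only [G, h0]
    simp
    linarith [hr0 i]
  have hd : DenseRange (fun (q : Fin k → ℚ) (i : Fin k) => (q i : ℝ)) :=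
    DenseRange.piMap (fun _ => Rat.denseRange_cast)
  obtain ⟨q, hq⟩ := hd.exists_mem_open hopen ⟨_, hmem⟩
  let c : Fin k → ℚ := fun i => q i + ∑ j, ((t j : ℚ) - ∑ l, q l * V l j) * R j i
  have hc0 : ∀ i, 0 < c i := by
    intro i
    have := hq i
    simp only [G] at this
    have h2 : (0 : ℝ) < (c i : ℝ) := by
      simp only [c]; push_cast; exact this
    exact_mod_cast h2
  have hc : ∀ l, ∑ i, c i * (V i l : ℚ) = t l := by
    intro l
    simp only [c, add_mul, Finset.sum_add_distrib, Finset.sum_mul]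
    have : ∑ i, ∑ j, ((t j : ℚ) - ∑ l, q l * V l j) * R j i * (V i l : ℚ)
        = (t l : ℚ) - ∑ i, q i * V i l := by
      rw [Finset.sum_comm]
      simp_rw [mul_assoc, ← Finset.mul_sum, hR]
      simp
    rw [this]; ring
  refine ⟨∏ i, (c i).den, Finset.prod_pos fun i _ => (c i).den_pos, ?_⟩
  have hs : ∀ i, ∃ n : ℕ, (n : ℚ) = c i * (∏ i, (c i).den : ℕ) := by
    intro i
    obtain ⟨s, hs⟩ := Finset.dvd_prod_of_mem (fun i => (c i).den) (Finset.mem_univ i)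
    refine ⟨(c i).num.toNat * s, ?_⟩
    rw [hs]
    have h1 : (((c i).num.toNat : ℤ)) = (c i).num :=
      Int.toNat_of_nonneg (Rat.num_nonneg.2 (hc0 i).le)
    have h2 : (((c i).num.toNat : ℕ) : ℚ) = ((c i).num : ℚ) := by exact_mod_cast h1
    push_cast
    rw [h2, ← mul_assoc, Rat.mul_den_eq_num]
  choose n hn using hs
  refine ⟨n, fun j => ?_⟩
  have : (∑ i, (n i : ℚ) * V i j) = ((∏ i, (c i).den : ℕ) : ℚ) * t j := by
    rw [← hc j, Finset.mul_sum]
    refine Finset.sum_congr rfl fun i _ => ?_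
    rw [hn]; ring
  exact_mod_cast this

/-- The set of (d,e) values of `S ∩ γ₂`. -/
def Tset (S : Subsemigroup (Matrix (Fin 4) (Fin 4) ℤ)) : AddSubsemigroup (ℤ × ℤ) where
  carrier := {p | ∃ f, UT 0 0 0 p.1 p.2 f ∈ S}
  add_mem' := by
    rintro ⟨d, e⟩ ⟨d', e'⟩ ⟨f, h⟩ ⟨f', h'⟩
    refine ⟨f + f', ?_⟩
    have := UT_mul_mem h h'
    simpa using this

/-- The set of φ0 values of `S`, together with `0`. -/
def Pset (S : Subsemigroup (Matrix (Fin 4) (Fin 4) ℤ)) : AddSubmonoid (Fin 3 → ℤ) where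
  carrier := {v | v = 0 ∨ ∃ d e f, UT (v 0) (v 1) (v 2) d e f ∈ S}
  zero_mem' := Or.inl rfl
  add_mem' := by
    rintro v w (rfl | ⟨d, e, f, h⟩) (rfl | ⟨d', e', f', h'⟩)
    · left; simp
    · right; exact ⟨d', e', f', by simpa using h'⟩
    · right; exact ⟨d, e, f, by simpa using h⟩
    · right; exact ⟨_, _, _, UT_mul_mem h h'⟩

lemma nsmul_mem_T {T : AddSubsemigroup (ℤ × ℤ)} {p : ℤ × ℤ} (h : p ∈ T) (n : ℕ) (hn : 0 < n) :
    n • p ∈ T := by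
  induction n, hn using Nat.le_induction with
  | base => simpa using h
  | succ n _ ih => rw [succ_nsmul]; exact T.add_mem ih h

lemma T_full (T : AddSubsemigroup (ℤ × ℤ)) (N : ℕ) (hN : 0 < N) (u1 u2 : ℤ)
    (h0 : ∀ n : ℕ, 0 < n → ((n * u1, n * u2) : ℤ × ℤ) ∈ T)
    (h1 : ∀ n : ℕ, 0 < n → ((n * u1 + n ^ 2 * N, n * u2) : ℤ × ℤ) ∈ T)
    (h1' : ∀ n : ℕ, 0 < n → ((n * u1 - n ^ 2 * N, n * u2) : ℤ × ℤ) ∈ T)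
    (h2 : ∀ n : ℕ, 0 < n → ((n * u1, n * u2 + n ^ 2 * N) : ℤ × ℤ) ∈ T)
    (h2' : ∀ n : ℕ, 0 < n → ((n * u1, n * u2 - n ^ 2 * N) : ℤ × ℤ) ∈ T) :
    ∃ K : ℕ, 0 < K ∧ ∀ x y : ℤ, ((K * x, K * y) : ℤ × ℤ) ∈ T := by
  -- generic multiples: for `α` any integer, some element
  have key1 : ∀ (n : ℕ), 0 < n → ∀ α : ℤ,
      ((n * (|α| + 1) * u1 + n ^ 2 * N * α, n * (|α| + 1) * u2) : ℤ × ℤ) ∈ T := by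
    intro n hn α
    rcases lt_trichotomy α 0 with h | h | h
    · have := T.add_mem (nsmul_mem_T (h1' n hn) α.natAbs (by omega)) (h0 n hn)
      convert this using 1
      rw [abs_of_neg h]
      have hh : (α.natAbs : ℤ) = -α := by omega
      ext <;> simp only [nsmul_eq_mul, Prod.fst_add, Prod.snd_add, Prod.fst_mul, Prod.snd_mul, Prod.fst_natCast, Prod.snd_natCast, hh] <;> ring
    · subst h; simpa using h0 n hn
    · have := T.add_mem (nsmul_mem_T (h1 n hn) α.natAbs (by omega)) (h0 n hn)
      convert this using 1
      rw [abs_of_pos h]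
      have hh : (α.natAbs : ℤ) = α := by omega
      ext <;> simp only [nsmul_eq_mul, Prod.fst_add, Prod.snd_add, Prod.fst_mul, Prod.snd_mul, Prod.fst_natCast, Prod.snd_natCast, hh] <;> ring
  have key2 : ∀ (n : ℕ), 0 < n → ∀ α : ℤ,
      ((n * (|α| + 1) * u1, n * (|α| + 1) * u2 + n ^ 2 * N * α) : ℤ × ℤ) ∈ T := by
    intro n hn α
    rcases lt_trichotomy α 0 with h | h | h
    · have := T.add_mem (nsmul_mem_T (h2' n hn) α.natAbs (by omega)) (h0 n hn)
      convert this using 1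
      rw [abs_of_neg h]
      have hh : (α.natAbs : ℤ) = -α := by omega
      ext <;> simp only [nsmul_eq_mul, Prod.fst_add, Prod.snd_add, Prod.fst_mul, Prod.snd_mul, Prod.fst_natCast, Prod.snd_natCast, hh] <;> ring
    · subst h; simpa using h0 n hn
    · have := T.add_mem (nsmul_mem_T (h2 n hn) α.natAbs (by omega)) (h0 n hn)
      convert this using 1
      rw [abs_of_pos h]
      have hh : (α.natAbs : ℤ) = α := by omega
      ext <;> simp only [nsmul_eq_mul, Prod.fst_add, Prod.snd_add, Prod.fst_mul, Prod.snd_mul, Prod.fst_natCast, Prod.snd_natCast, hh] <;> ring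
  -- a negative multiple of u
  have hneg : ∃ L : ℕ, 0 < L ∧ ((-(L * u1), -(L * u2)) : ℤ × ℤ) ∈ T := by
    set n : ℕ := u1.natAbs + u2.natAbs + 3 with hn
    have hmem := T.add_mem (key1 n (by omega) (-u1)) (key2 n (by omega) (-u2))
    have hab : |u1| + |u2| + 3 = (n : ℤ) := by rw [hn]; push_cast; simp
    have hle : |u1| + |u2| + 3 ≤ (n : ℤ) * N := by
      rw [hab]; exact_mod_cast Nat.le_mul_of_pos_right n hN
    have hnpos : 0 < (n : ℤ) := by omega
    refine ⟨((n : ℤ) * (n * N - (|u1| + |u2| + 2))).toNat, ?_, ?_⟩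
    · have : 0 < (n : ℤ) * (n * N - (|u1| + |u2| + 2)) := mul_pos hnpos (by linarith)
      omega
    · rw [Int.toNat_of_nonneg (mul_nonneg hnpos.le (by linarith))]
      convert hmem using 1
      ext <;> simp only [Prod.fst_add, Prod.snd_add, abs_neg] <;> ring
  obtain ⟨L, hL, hLmem⟩ := hneg
  -- every integer multiple of `L u`
  have hz : ∀ z : ℤ, ((L * z * u1, L * z * u2) : ℤ × ℤ) ∈ T := by
    intro z
    have a1 := nsmul_mem_T hLmem (z.natAbs + 1) (by omega)
    have a2 := h0 (L * (z.natAbs + 1 + z).toNat) (Nat.mul_pos hL (by omega))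
    have := T.add_mem a1 a2
    convert this using 1
    have hh : (((z.natAbs + 1 + z).toNat : ℕ) : ℤ) = z.natAbs + 1 + z := by omega
    ext <;> simp only [nsmul_eq_mul, Prod.fst_add, Prod.snd_add, Prod.fst_mul, Prod.snd_mul, Prod.fst_natCast, Prod.snd_natCast] <;> rw [Nat.cast_mul, hh] <;> push_cast <;> ring
  refine ⟨L ^ 2 * N, by positivity, fun x y => ?_⟩
  have := T.add_mem (T.add_mem (key1 L hL x) (key2 L hL y)) (hz (-(|x| + 1) - (|y| + 1)))
  convert this using 1
  ext <;> simp only [Prod.fst_add, Prod.snd_add] <;> push_cast <;> ring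

theorem stmt9 (k : ℕ) (A : Fin k → Matrix (Fin 4) (Fin 4) ℤ)
    (hA : ∀ i, A i ∈ UT4)
    (hcone : coneFin (fun i => phi0R (A i)) = Set.univ) :
    (1 : Matrix (Fin 4) (Fin 4) ℤ) ∈ Subsemigroup.closure (Set.range A) := by
  set S := Subsemigroup.closure (Set.range A) with hS
  have hP : ∀ t : Fin 3 → ℤ, t ≠ 0 → ∃ m : ℕ, 0 < m ∧ (m : ℤ) • t ∈ Pset S := by
    intro t ht
    obtain ⟨m, hm, n, hn⟩ := cone_int (fun i => ![A i 0 1, A i 1 2, A i 2 3]) (by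
      intro t
      have : t ∈ coneFin (fun i => phi0R (A i)) := by rw [hcone]; trivial
      obtain ⟨r, hr, rfl⟩ := this
      refine ⟨r, hr, fun j => ?_⟩
      rw [Finset.sum_apply]
      refine Finset.sum_congr rfl fun i _ => ?_
      fin_cases j <;> simp [phi0R]) t
    refine ⟨m, hm, ?_⟩
    have : (m : ℤ) • t = ∑ i, n i • ![A i 0 1, A i 1 2, A i 2 3] := by
      ext j
      rw [Finset.sum_apply]
      simp only [Pi.smul_apply, smul_eq_mul, nsmul_eq_mul]
      exact (hn j).symm
    rw [this]
    refine sum_mem fun i _ => nsmul_mem ?_ _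
    right
    obtain ⟨a, b, c, d, e, f, h⟩ := hA i
    refine ⟨d, e, f, ?_⟩
    have h2 : A i ∈ S := Subsemigroup.subset_closure ⟨i, rfl⟩
    have : UT (A i 0 1) (A i 1 2) (A i 2 3) d e f = A i := by rw [h]; simp [UT]
    simpa [this] using h2
  obtain ⟨m1, hm1, p1⟩ := hP ![1, 0, 0] (by simp)
  obtain ⟨m2, hm2, p2⟩ := hP ![-1, 0, 0] (by simp)
  obtain ⟨m3, hm3, p3⟩ := hP ![0, 1, 0] (by simp)
  obtain ⟨m4, hm4, p4⟩ := hP ![0, -1, 0] (by simp)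
  obtain ⟨m5, hm5, p5⟩ := hP ![0, 0, 1] (by simp)
  obtain ⟨m6, hm6, p6⟩ := hP ![0, 0, -1] (by simp)
  obtain ⟨m, hm, hmdef⟩ : ∃ m : ℕ, 0 < m ∧ m = m1 * m2 * m3 * m4 * m5 * m6 :=
    ⟨_, by positivity, rfl⟩
  have hmZ : (m : ℤ) ≠ 0 := by exact_mod_cast hm.ne'
  have conv : ∀ (t : Fin 3 → ℤ) (m' : ℕ), t ≠ 0 → m' ∣ m → (m' : ℤ) • t ∈ Pset S →
      ∃ d e f, UT (m * t 0) (m * t 1) (m * t 2) d e f ∈ S := by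
    rintro t m' ht ⟨s, hs⟩ hp
    have h := nsmul_mem hp s
    have h' : s • (m' : ℤ) • t = (m : ℤ) • t := by
      rw [hs, ← natCast_zsmul, smul_smul]; push_cast; rw [mul_comm]
    rw [h'] at h
    rcases h with h | h
    · exact absurd ((smul_eq_zero.1 h).resolve_left hmZ) ht
    · simpa using h
  obtain ⟨xd, xe, xf, hx⟩ := conv _ m1 (by simp) ⟨m2*m3*m4*m5*m6, by rw [hmdef]; ring⟩ p1
  obtain ⟨xd', xe', xf', hx'⟩ := conv _ m2 (by simp) ⟨m1*m3*m4*m5*m6, by rw [hmdef]; ring⟩ p2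
  obtain ⟨yd, ye, yf, hy⟩ := conv _ m3 (by simp) ⟨m1*m2*m4*m5*m6, by rw [hmdef]; ring⟩ p3
  obtain ⟨yd', ye', yf', hy'⟩ := conv _ m4 (by simp) ⟨m1*m2*m3*m5*m6, by rw [hmdef]; ring⟩ p4
  obtain ⟨zd, ze, zf, hz⟩ := conv _ m5 (by simp) ⟨m1*m2*m3*m4*m6, by rw [hmdef]; ring⟩ p5
  obtain ⟨zd', ze', zf', hz'⟩ := conv _ m6 (by simp) ⟨m1*m2*m3*m4*m5, by rw [hmdef]; ring⟩ p6
  simp at hx hx' hy hy' hz hz'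
  clear conv p1 p2 p3 p4 p5 p6 hmdef
  -- powers
  have pw : ∀ {a b c d e f : ℤ}, a * b = 0 → b * c = 0 → UT a b c d e f ∈ S → ∀ n : ℕ, 0 < n →
      ∃ f', UT (n * a) (n * b) (n * c) (n * d) (n * e) f' ∈ S := by
    intro a b c d e f hab hbc h n hn
    obtain ⟨n, rfl⟩ : ∃ l, n = l + 1 := ⟨n - 1, by omega⟩
    simpa using UT_pow_mem hab hbc h n
  obtain ⟨K, hK, hT⟩ := T_full (Tset S) (m ^ 2) (by positivity)
    (xd + xd' + yd + yd' + zd + zd') (xe + xe' + ye + ye' + ze + ze')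
    (by
      intro n hn
      obtain ⟨f1, g1⟩ := pw (by simp) (by simp) hx n hn
      obtain ⟨f2, g2⟩ := pw (by simp) (by simp) hx' n hn
      obtain ⟨f3, g3⟩ := pw (by simp) (by simp) hy n hn
      obtain ⟨f4, g4⟩ := pw (by simp) (by simp) hy' n hn
      obtain ⟨f5, g5⟩ := pw (by simp) (by simp) hz n hn
      obtain ⟨f6, g6⟩ := pw (by simp) (by simp) hz' n hn
      refine UT_ex (UT_mul_mem (UT_mul_mem (UT_mul_mem (UT_mul_mem (UT_mul_mem g1 g2) g3) g4) g5) g6)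
        ?_ ?_ ?_ ?_ ?_ <;> push_cast <;> ring)
    (by
      intro n hn
      obtain ⟨f1, g1⟩ := pw (by simp) (by simp) hx n hn
      obtain ⟨f2, g2⟩ := pw (by simp) (by simp) hx' n hn
      obtain ⟨f3, g3⟩ := pw (by simp) (by simp) hy n hn
      obtain ⟨f4, g4⟩ := pw (by simp) (by simp) hy' n hn
      obtain ⟨f5, g5⟩ := pw (by simp) (by simp) hz n hn
      obtain ⟨f6, g6⟩ := pw (by simp) (by simp) hz' n hn
      refine UT_ex (UT_mul_mem (UT_mul_mem (UT_mul_mem (UT_mul_mem (UT_mul_mem g1 g3) g2) g4) g5) g6)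
        ?_ ?_ ?_ ?_ ?_ <;> push_cast <;> ring)
    (by
      intro n hn
      obtain ⟨f1, g1⟩ := pw (by simp) (by simp) hx n hn
      obtain ⟨f2, g2⟩ := pw (by simp) (by simp) hx' n hn
      obtain ⟨f3, g3⟩ := pw (by simp) (by simp) hy n hn
      obtain ⟨f4, g4⟩ := pw (by simp) (by simp) hy' n hn
      obtain ⟨f5, g5⟩ := pw (by simp) (by simp) hz n hn
      obtain ⟨f6, g6⟩ := pw (by simp) (by simp) hz' n hn
      refine UT_ex (UT_mul_mem (UT_mul_mem (UT_mul_mem (UT_mul_mem (UT_mul_mem g3 g1) g4) g2) g5) g6)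
        ?_ ?_ ?_ ?_ ?_ <;> push_cast <;> ring)
    (by
      intro n hn
      obtain ⟨f1, g1⟩ := pw (by simp) (by simp) hx n hn
      obtain ⟨f2, g2⟩ := pw (by simp) (by simp) hx' n hn
      obtain ⟨f3, g3⟩ := pw (by simp) (by simp) hy n hn
      obtain ⟨f4, g4⟩ := pw (by simp) (by simp) hy' n hn
      obtain ⟨f5, g5⟩ := pw (by simp) (by simp) hz n hn
      obtain ⟨f6, g6⟩ := pw (by simp) (by simp) hz' n hn
      refine UT_ex (UT_mul_mem (UT_mul_mem (UT_mul_mem (UT_mul_mem (UT_mul_mem g1 g2) g3) g5) g4) g6)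
        ?_ ?_ ?_ ?_ ?_ <;> push_cast <;> ring)
    (by
      intro n hn
      obtain ⟨f1, g1⟩ := pw (by simp) (by simp) hx n hn
      obtain ⟨f2, g2⟩ := pw (by simp) (by simp) hx' n hn
      obtain ⟨f3, g3⟩ := pw (by simp) (by simp) hy n hn
      obtain ⟨f4, g4⟩ := pw (by simp) (by simp) hy' n hn
      obtain ⟨f5, g5⟩ := pw (by simp) (by simp) hz n hn
      obtain ⟨f6, g6⟩ := pw (by simp) (by simp) hz' n hn
      refine UT_ex (UT_mul_mem (UT_mul_mem (UT_mul_mem (UT_mul_mem (UT_mul_mem g1 g2) g5) g3) g6) g4)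
        ?_ ?_ ?_ ?_ ?_ <;> push_cast <;> ring)
  -- step B: an element of `S` invertible in `S` modulo the centre
  obtain ⟨F, hp⟩ := pw (by simp) (by simp) hx K hK
  obtain ⟨F0, hq0⟩ := pw (by simp) (by simp) hx' K hK
  obtain ⟨g0, hC⟩ := hT (-(xd + xd')) (-(xe + xe'))
  obtain ⟨g, hW⟩ := hT 0 1
  obtain ⟨g', hW'⟩ := hT 0 (-1)
  obtain ⟨F', hq⟩ : ∃ F', UT (-(K * m : ℤ)) 0 0 (-(K * xd)) (-(K * xe)) F' ∈ S := by
    refine UT_ex (UT_mul_mem hq0 hC) ?_ ?_ ?_ ?_ ?_ <;> push_cast <;> ring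
  simp at hp hW hW'
  have key : ∀ n : ℕ, ∃ f, UT 0 0 0 0 0 f ∈ S ∧ f = (n + 1 : ℤ) * (F + F' + g + g' - K * m * (K * xe))
      + (n + 1 : ℤ) ^ 2 * (K * m * K) := by
    intro n
    obtain ⟨f1, k1, e1⟩ := UT_pow_mem' hp n
    obtain ⟨f2, k2, e2⟩ := UT_pow_mem' hW n
    obtain ⟨f3, k3, e3⟩ := UT_pow_mem' hq n
    obtain ⟨f4, k4, e4⟩ := UT_pow_mem' hW' n
    refine ⟨_, UT_eq (UT_mul_mem (UT_mul_mem (UT_mul_mem k1 k2) k3) k4) ?_ ?_ ?_ ?_ ?_ ?_, rfl⟩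
    · ring
    · ring
    · ring
    · ring
    · ring
    · linarith
  have key' : ∀ n : ℕ, ∃ f, UT 0 0 0 0 0 f ∈ S ∧ f = (n + 1 : ℤ) * (F + F' + g + g' - K * m * (K * xe))
      - (n + 1 : ℤ) ^ 2 * (K * m * K) := by
    intro n
    obtain ⟨f1, k1, e1⟩ := UT_pow_mem' hp n
    obtain ⟨f2, k2, e2⟩ := UT_pow_mem' hW n
    obtain ⟨f3, k3, e3⟩ := UT_pow_mem' hq n
    obtain ⟨f4, k4, e4⟩ := UT_pow_mem' hW' n
    refine ⟨_, UT_eq (UT_mul_mem (UT_mul_mem (UT_mul_mem k1 k4) k3) k2) ?_ ?_ ?_ ?_ ?_ ?_, rfl⟩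
    · ring
    · ring
    · ring
    · ring
    · ring
    · linarith
  generalize F + F' + g + g' - (K : ℤ) * m * (K * xe) = w at key key'
  have hpos : (1 : ℤ) ≤ K * m * K := by
    have : 0 < K * m * K := by positivity
    exact_mod_cast this
  generalize (K : ℤ) * m * K = B at key key' hpos
  obtain ⟨f, hf, ef⟩ := key w.natAbs
  obtain ⟨f', hf', ef'⟩ := key' w.natAbs
  have hwa : ((w.natAbs : ℕ) : ℤ) = |w| := by simp
  rw [hwa] at ef ef'
  have hf0 : 0 < f := by
    rw [ef]; nlinarith [neg_abs_le w, abs_nonneg w, mul_nonneg (abs_nonneg w) (sub_nonneg.2 hpos)]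
  have hf0' : f' < 0 := by
    rw [ef']; nlinarith [le_abs_self w, abs_nonneg w, mul_nonneg (abs_nonneg w) (sub_nonneg.2 hpos)]
  obtain ⟨a, ha⟩ : ∃ a : ℕ, f = a + 1 := ⟨(f - 1).toNat, by omega⟩
  obtain ⟨b, hb⟩ : ∃ b : ℕ, f' = -(b + 1 : ℤ) := ⟨(-f' - 1).toNat, by omega⟩
  obtain ⟨r1, q1, s1⟩ := UT_pow_mem' hf b
  obtain ⟨r2, q2, s2⟩ := UT_pow_mem' hf' a
  have := UT_mul_mem q1 q2
  rw [UT_one]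
  convert this using 1
  have : r1 + r2 = 0 := by rw [ha] at s1; rw [hb] at s2; linarith
  congr 1 <;> simp [this]
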